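/- Bounded-difference property of the MMD difference statistic: define g(x^n, u^N, v^N) := MMD²(x^n, u^N) − MMD²(x^n, v^N) for x^n ∈ 𝓧^n, u^N, v^N ∈ 𝓧^N with n, N ≥ 2. Then replacing any single coordinate of x^n by an arbitrary element of 𝓧 changes the value of g by at most 8K₀/n in absolute value, and replacing any single coordinate of u^N or of v^N by an arbitrary element of 𝓧 changes the value of g by at most 8K₀/N in absolute value. -/

import Mathlib

open MeasureTheory

/-- Empirical (unbiased) squared MMD statistic between two finite samples. -/
noncomputable def mmd2emp {𝓧 : Type*} (k : 𝓧 → 𝓧 → ℝ) {n₁ n₂ : ℕ}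
    (x : Fin n₁ → 𝓧) (y : Fin n₂ → 𝓧) : ℝ :=
  (1 / ((n₁ : ℝ) * ((n₁ : ℝ) - 1))) *
      ∑ i : Fin n₁, ∑ j ∈ Finset.univ.filter (fun j => j ≠ i), k (x i) (x j)
    + (1 / ((n₂ : ℝ) * ((n₂ : ℝ) - 1))) *
      ∑ i : Fin n₂, ∑ j ∈ Finset.univ.filter (fun j => j ≠ i), k (y i) (y j)
    - (2 / ((n₁ : ℝ) * (n₂ : ℝ))) * ∑ i : Fin n₁, ∑ j : Fin n₂, k (x i) (y j)

/-- The MMD difference statistic `g(x,u,v) = MMD²(x,u) − MMD²(x,v)`. -/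
noncomputable def mmdDiff {𝓧 : Type*} (k : 𝓧 → 𝓧 → ℝ) {n N : ℕ}
    (x : Fin n → 𝓧) (u v : Fin N → 𝓧) : ℝ :=
  mmd2emp k x u - mmd2emp k x v

/-- The empirical squared MMD is symmetric in its two samples when the kernel is symmetric. -/
theorem mmd2emp_comm {𝓧 : Type*} {k : 𝓧 → 𝓧 → ℝ} (hk_symm : ∀ x y, k x y = k y x) {n₁ n₂ : ℕ}
    (x : Fin n₁ → 𝓧) (y : Fin n₂ → 𝓧) : mmd2emp k x y = mmd2emp k y x := by
  have hcross : ∑ i, ∑ j, k (x i) (y j) = ∑ j, ∑ i, k (y j) (x i) := by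
    rw [Finset.sum_comm]
    exact Finset.sum_congr rfl fun j _ => Finset.sum_congr rfl fun i _ => hk_symm _ _
  unfold mmd2emp
  rw [hcross, mul_comm (n₁ : ℝ) n₂]
  ring

/-- Replacing one sample point changes the off-diagonal kernel sum by at most `2 (n - 1) K`. -/
theorem abs_offDiag_sum_sub_update_le {𝓧 : Type*} {k : 𝓧 → 𝓧 → ℝ} {K : ℝ} (hK : 0 ≤ K)
    (hk : ∀ a b c d, |k a b - k c d| ≤ K) {n : ℕ} (x : Fin n → 𝓧) (l : Fin n) (x' : 𝓧) :
    |∑ i : Fin n, ∑ j ∈ Finset.univ.filter (fun j => j ≠ i), k (x i) (x j) -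
      ∑ i : Fin n, ∑ j ∈ Finset.univ.filter (fun j => j ≠ i),
        k (Function.update x l x' i) (Function.update x l x' j)| ≤ 2 * ((n : ℝ) - 1) * K := by
  have hcard (i : Fin n) :
      ((Finset.univ.filter (fun j => j ≠ i)).card : ℝ) = (n : ℝ) - 1 := by
    rw [Finset.filter_ne', Finset.card_erase_of_mem (Finset.mem_univ i), Finset.card_univ,
      Fintype.card_fin, Nat.cast_pred i.pos]
  have hrow : ∑ i : Fin n, ∑ j ∈ Finset.univ.filter (fun j => j ≠ i), (if i = l then K else 0)
      = ((n : ℝ) - 1) * K := by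
    simp only [Finset.sum_const, nsmul_eq_mul, hcard]
    simp
  have hcol : ∑ i : Fin n, ∑ j ∈ Finset.univ.filter (fun j => j ≠ i), (if j = l then K else 0)
      = ((n : ℝ) - 1) * K := by
    rw [← hrow]
    simp only [Finset.sum_filter]
    rw [Finset.sum_comm]
    simp only [ne_comm]
  simp only [← Finset.sum_sub_distrib]
  calc _ ≤ ∑ i : Fin n, ∑ j ∈ Finset.univ.filter (fun j => j ≠ i),
        ((if i = l then K else 0) + (if j = l then K else 0)) := by
        refine (Finset.abs_sum_le_sum_abs _ _).trans (Finset.sum_le_sum fun i _ => ?_)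
        refine (Finset.abs_sum_le_sum_abs _ _).trans (Finset.sum_le_sum fun j _ => ?_)
        by_cases hi : i = l
        · refine (hk _ _ _ _).trans ?_
          split_ifs <;> linarith
        · by_cases hj : j = l
          · refine (hk _ _ _ _).trans ?_
            simp [hi, hj]
          · simp [hi, hj]
    _ = 2 * ((n : ℝ) - 1) * K := by
        simp only [Finset.sum_add_distrib, hrow, hcol]
        ring

/-- Replacing one point of the first sample changes the cross kernel sum by at most `n₂ K`. -/
theorem abs_cross_sum_sub_update_le {𝓧 : Type*} {k : 𝓧 → 𝓧 → ℝ} {K : ℝ}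
    (hk : ∀ a b c d, |k a b - k c d| ≤ K) {n₁ n₂ : ℕ} (x : Fin n₁ → 𝓧) (y : Fin n₂ → 𝓧)
    (l : Fin n₁) (x' : 𝓧) :
    |∑ i, ∑ j, k (x i) (y j) - ∑ i, ∑ j, k (Function.update x l x' i) (y j)| ≤ n₂ * K := by
  rw [← Finset.sum_sub_distrib, Finset.sum_eq_single l (fun i _ hi => by simp [hi]) (by simp),
    ← Finset.sum_sub_distrib]
  refine (Finset.abs_sum_le_sum_abs _ _).trans ?_
  exact (Finset.sum_le_card_nsmul _ _ K fun j _ => hk _ _ _ _).trans_eq (by simp)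

/-- Replacing one point of the first sample changes the empirical squared MMD by at most
`4 K / n₁`. -/
theorem abs_mmd2emp_sub_update_left_le {𝓧 : Type*} {k : 𝓧 → 𝓧 → ℝ} {K : ℝ} (hK : 0 ≤ K)
    (hk : ∀ a b c d, |k a b - k c d| ≤ K) {n₁ n₂ : ℕ} (hn₁ : 2 ≤ n₁) (hn₂ : 2 ≤ n₂)
    (x : Fin n₁ → 𝓧) (y : Fin n₂ → 𝓧) (l : Fin n₁) (x' : 𝓧) :
    |mmd2emp k x y - mmd2emp k (Function.update x l x') y| ≤ 4 * K / n₁ := by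
  have hself := abs_offDiag_sum_sub_update_le hK hk x l x'
  have hcross := abs_cross_sum_sub_update_le hk x y l x'
  have h₁ : (2 : ℝ) ≤ n₁ := by exact_mod_cast hn₁
  have h₂ : (2 : ℝ) ≤ n₂ := by exact_mod_cast hn₂
  have h₁' : (0 : ℝ) < (n₁ : ℝ) - 1 := by linarith
  unfold mmd2emp
  rw [sub_sub_sub_comm, add_sub_add_right_eq_sub, ← mul_sub, ← mul_sub]
  refine (abs_sub _ _).trans ?_
  rw [abs_mul, abs_mul, abs_of_nonneg (a := 1 / ((n₁ : ℝ) * ((n₁ : ℝ) - 1))) (by positivity),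
    abs_of_nonneg (a := 2 / ((n₁ : ℝ) * (n₂ : ℝ))) (by positivity)]
  calc _ ≤ 1 / ((n₁ : ℝ) * ((n₁ : ℝ) - 1)) * (2 * ((n₁ : ℝ) - 1) * K)
        + 2 / ((n₁ : ℝ) * (n₂ : ℝ)) * (n₂ * K) := by gcongr
    _ = 4 * K / n₁ := by
        field_simp
        ring

/-- Bounded-difference property of the MMD difference statistic
`g(x,u,v) = MMD²(x,u) − MMD²(x,v)`: replacing one coordinate of `x` changes the value by at
most `8 K₀ / n`, and replacing one coordinate of `u` or of `v` changes the value by at most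
`8 K₀ / N`. -/
theorem mmdDiff_bounded_differences
    {𝓧 : Type*} [MeasurableSpace 𝓧]
    (K₀ : ℝ) (hK₀ : 0 < K₀) (k : 𝓧 → 𝓧 → ℝ)
    (hk_meas : Measurable (Function.uncurry k))
    (hk_symm : ∀ x y, k x y = k y x)
    (hk_nonneg : ∀ x y, 0 ≤ k x y) (hk_bdd : ∀ x y, k x y ≤ K₀)
    {n N : ℕ} (hn : 2 ≤ n) (hN : 2 ≤ N)
    (x : Fin n → 𝓧) (u v : Fin N → 𝓧) :
    (∀ (l : Fin n) (x' : 𝓧),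
      |mmdDiff k x u v - mmdDiff k (Function.update x l x') u v| ≤ 8 * K₀ / n) ∧
    (∀ (l : Fin N) (u' : 𝓧),
      |mmdDiff k x u v - mmdDiff k x (Function.update u l u') v| ≤ 8 * K₀ / N) ∧
    (∀ (l : Fin N) (v' : 𝓧),
      |mmdDiff k x u v - mmdDiff k x u (Function.update v l v')| ≤ 8 * K₀ / N) := by
  have hk : ∀ a b c d, |k a b - k c d| ≤ K₀ := fun a b c d =>
    abs_sub_le_of_nonneg_of_le (hk_nonneg a b) (hk_bdd a b) (hk_nonneg c d) (hk_bdd c d)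
  have hleft {n₁ n₂ : ℕ} (h₁ : 2 ≤ n₁) (h₂ : 2 ≤ n₂) (a : Fin n₁ → 𝓧) (b : Fin n₂ → 𝓧)
      (l : Fin n₁) (a' : 𝓧) := abs_mmd2emp_sub_update_left_le hK₀.le hk h₁ h₂ a b l a'
  have hN_le : 4 * K₀ / N ≤ 8 * K₀ / N := by
    gcongr
    norm_num
  unfold mmdDiff
  refine ⟨fun l x' => ?_, fun l u' => ?_, fun l v' => ?_⟩
  · rw [sub_sub_sub_comm]
    calc _ ≤ _ := abs_sub _ _
      _ ≤ 4 * K₀ / n + 4 * K₀ / n := add_le_add (hleft hn hN x u l x') (hleft hn hN x v l x')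
      _ = 8 * K₀ / n := by ring
  · rw [sub_sub_sub_cancel_right, mmd2emp_comm hk_symm x, mmd2emp_comm hk_symm x]
    exact (hleft hN hn u x l u').trans hN_le
  · rw [sub_sub_sub_cancel_left, abs_sub_comm, mmd2emp_comm hk_symm x, mmd2emp_comm hk_symm x]
    exact (hleft hN hn v x l v').trans hN_le
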